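/- Let G be a 3-regular simple graph of girth at least 8 such that G does not contain two cycles of length 8 whose intersection is a path of length 2. Then the cop number of G is at least 4. -/

import Mathlib

/-- `copsWin G c` : in the game of cops and robbers on `G`, `c` cops have a winning
strategy. The cops choose initial positions `init` and a move function `F` (each cop
stays put or moves along an edge). The robber then chooses an initial position (knowing
the cops' placement) and a move function (staying put or moving along an edge); cops
move first on each turn. The cops win if at some time a cop occupies the robber's
current vertex. -/
def copsWin {V : Type*} (G : SimpleGraph V) (c : ℕ) : Prop :=
  ∃ (init : Fin c → V) (F : (Fin c → V) → V → (Fin c → V)),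
    (∀ (p : Fin c → V) (r : V) (i : Fin c), F p r i = p i ∨ G.Adj (p i) (F p r i)) ∧
    ∀ (rinit : (Fin c → V) → V) (rmove : (Fin c → V) → V → V),
      (∀ (p : Fin c → V) (r : V), rmove p r = r ∨ G.Adj r (rmove p r)) →
      ∀ (cseq : ℕ → Fin c → V) (rseq : ℕ → V),
        cseq 0 = init → rseq 0 = rinit init →
        (∀ t, cseq (t + 1) = F (cseq t) (rseq t)) →
        (∀ t, rseq (t + 1) = rmove (cseq (t + 1)) (rseq t)) →
        ∃ (t : ℕ) (i : Fin c), cseq t i = rseq t ∨ cseq (t + 1) i = rseq t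

/-- The cop number of `G`: the least number of cops having a winning strategy. -/
noncomputable def copNumber {V : Type*} (G : SimpleGraph V) : ℕ :=
  sInf {c | copsWin G c}

/-!
The robber moves on every turn, keeping the invariant `IsSafe`. Suppose that there are at most as
many cops as neighbours of any vertex, and that the robber, at `r` with a neighbour `c` whose branch
of radius 2 is free of cops, would not be safe at `c`. Then each branch of radius 3 at a neighbour
of `c` holds a cop, and by the girth bound these branches are disjoint, so each holds exactly one.
The cop in the branch at `r` is in the branch of radius 2 at some `a` adjacent to `r`. Take a third
neighbour `b` of `r`. If `b` is not safe either, the same cops occupy the branches around `b`, the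
cop beyond `a` being again the one in the branch at `r`. Any two other cops `x`, `y` then close two
8-cycles through `c`, `r`, `b`, one through `x` and one through `y`, which meet only in the path
`c r b`.
-/

open SimpleGraph

section Paths

variable {V : Type*} {G : SimpleGraph V} {u v w z : V} {g : ℕ}

theorem eq_of_isPath_of_length_add_lt (hg : g ≤ G.egirth) {p q : G.Walk u v} (hp : p.IsPath)
    (hq : q.IsPath) (hpq : p.length + q.length < g) : p = q := by
  by_contra hne
  obtain ⟨_, _, _, c, hc, hle⟩ := hp.exists_isCycle_length_le_add_of_ne hq hne
  have : g ≤ c.length := by exact_mod_cast hg.trans (egirth_le_length hc)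
  omega

theorem eq_start_or_eq_ends_of_mem_supports (hg : g ≤ G.egirth) {p : G.Walk u v} {q : G.Walk u w}
    (hp : p.IsPath) (hq : q.IsPath) (hsnd : p.snd ≠ q.snd) (hpq : p.length + q.length ≤ g)
    (hzp : z ∈ p.support) (hzq : z ∈ q.support) : z = u ∨ z = v ∧ z = w := by
  classical
  -- Cut at a common vertex `z` other than `u`, the two paths become distinct paths from `u` to `z`,
  -- so by the girth bound neither can have lost any length.
  by_contra! hz
  have hne : p.takeUntil z hzp ≠ q.takeUntil z hzq := fun h => hsnd <| by
    rw [← Walk.snd_takeUntil hz.1 p hzp, h, Walk.snd_takeUntil hz.1 q hzq]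
  have hcut : g ≤ (p.takeUntil z hzp).length + (q.takeUntil z hzq).length := by
    by_contra! hlt
    exact hne (eq_of_isPath_of_length_add_lt hg (hp.takeUntil hzp) (hq.takeUntil hzq) hlt)
  have hp_le := p.length_takeUntil_le_length hzp
  have hq_le := q.length_takeUntil_le_length hzq
  by_cases hzv : z = v
  · have := Walk.length_takeUntil_lt_length hzq (hz.2 hzv)
    omega
  · have := Walk.length_takeUntil_lt_length hzp hzv
    omega

theorem eq_start_of_mem_supports (hg : g ≤ G.egirth) {p : G.Walk u v} {q : G.Walk u w}
    (hp : p.IsPath) (hq : q.IsPath) (hsnd : p.snd ≠ q.snd) (hpq : p.length + q.length ≤ g)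
    (hvw : v ≠ w) (hzp : z ∈ p.support) (hzq : z ∈ q.support) : z = u :=
  (eq_start_or_eq_ends_of_mem_supports hg hp hq hsnd hpq hzp hzq).resolve_right
    fun h => hvw (h.1.symm.trans h.2)

theorem isCycle_append_reverse (hg : g ≤ G.egirth) {p q : G.Walk u v} (hp : p.IsPath)
    (hq : q.IsPath) (hsnd : p.snd ≠ q.snd) (hpq : p.length + q.length ≤ g) :
    (p.append q.reverse).IsCycle := by
  refine hp.isCycle_append hq.reverse (fun z hzp hzq => ?_) ?_
  · have hp_nodup := p.cons_tail_support ▸ hp.support_nodup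
    have hq_nodup := q.reverse.cons_tail_support ▸ hq.reverse.support_nodup
    have hzq' : z ∈ q.support := by simpa using List.mem_of_mem_tail hzq
    have := eq_start_or_eq_ends_of_mem_supports hg hp hq hsnd hpq (List.mem_of_mem_tail hzp) hzq'
    grind
  · rw [Walk.length_reverse]
    by_contra! hle
    exact hsnd (by rw [Walk.eq_of_length_le_one hle.1 hle.2])

theorem isPath_cons_of_snd_ne (hg : g ≤ G.egirth) {p : G.Walk v w} (hp : p.IsPath)
    (huv : G.Adj u v) (hsnd : p.snd ≠ u) (hlt : p.length + 1 < g) : (Walk.cons huv p).IsPath := by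
  classical
  refine (Walk.cons_isPath_iff huv p).2 ⟨hp, fun hu => hsnd ?_⟩
  have hle := p.length_takeUntil_le_length hu
  have hedge : p.takeUntil u hu = huv.symm.toWalk :=
    eq_of_isPath_of_length_add_lt hg (hp.takeUntil hu) (by simp [huv.ne']) (by simp; omega)
  rw [← Walk.snd_takeUntil huv.ne p hu, hedge, Walk.snd_cons]

end Paths

section Branches

variable {V : Type*} {G : SimpleGraph V} {k l g : ℕ} {r a b y z : V}

/-- The branch at `a` of the ball of radius `k` around `r`: the ends of the paths of length at most
`k` that leave `r` through `a`. Below half the girth, the branches at the neighbours of `r` are the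
subtrees hanging from `r`. -/
def branch (G : SimpleGraph V) (k : ℕ) (r a : V) : Set V :=
  {z | ∃ p : G.Walk r z, p.IsPath ∧ p.length ≤ k ∧ p.snd = a}

theorem branch_mono (hkl : k ≤ l) : branch G k r a ⊆ branch G l r a :=
  fun _ ⟨p, hp, hk, ha⟩ => ⟨p, hp, hk.trans hkl, ha⟩

theorem self_mem_branch_one (hra : G.Adj r a) : a ∈ branch G 1 r a :=
  ⟨hra.toWalk, by simp [hra.ne], by simp, by simp⟩

theorem root_notMem_branch (hra : r ≠ a) : r ∉ branch G k r a := by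
  rintro ⟨p, hp, -, hsnd⟩
  rw [(Walk.isPath_iff_nil.1 hp).eq_nil] at hsnd
  exact hra hsnd

theorem mem_branch_succ_of_adj (hra : r ≠ a) (hy : y ∈ branch G k r a) (hyz : G.Adj y z)
    (hzr : z ≠ r) : z ∈ branch G (k + 1) r a := by
  classical
  obtain ⟨p, hp, hk, ha⟩ := hy
  by_cases hz : z ∈ p.support
  · exact ⟨p.takeUntil z hz, hp.takeUntil hz, (p.length_takeUntil_le_length hz).trans (by omega),
      (Walk.snd_takeUntil hzr p hz).trans ha⟩
  · refine ⟨p.concat hyz, hp.concat hz hyz, by simpa using hk, ?_⟩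
    cases p with
    | nil => exact absurd ha hra
    | cons => simpa [Walk.concat_cons] using ha

theorem exists_mem_branch_of_mem_branch_succ (hra : r ≠ a) (hz : z ∈ branch G (k + 1) r a) :
    z = a ∨ ∃ b, G.Adj a b ∧ z ∈ branch G k a b := by
  obtain ⟨p, hp, hpk, rfl⟩ := hz
  cases p with
  | nil => exact absurd rfl hra
  | cons h q =>
    rw [Walk.snd_cons]
    exact or_iff_not_imp_left.2 fun hne =>
      ⟨q.snd, q.adj_snd (Walk.not_nil_of_ne (Ne.symm hne)), q, hp.of_cons, by simpa using hpk, rfl⟩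

theorem eq_of_mem_branch_one (hra : r ≠ a) (hz : z ∈ branch G 1 r a) : z = a := by
  refine (exists_mem_branch_of_mem_branch_succ hra hz).resolve_right ?_
  rintro ⟨b, hab, p, -, hp, rfl⟩
  have hpz : p.length = 0 := by omega
  exact hab.ne ((p.eq_of_length_eq_zero hpz).trans (p.getVert_of_length_le (by omega)).symm)

theorem disjoint_branch (hg : g ≤ G.egirth) (hkl : k + l < g) (hab : a ≠ b) :
    Disjoint (branch G k r a) (branch G l r b) := by
  rw [Set.disjoint_left]
  rintro z ⟨p, hp, hpk, rfl⟩ ⟨q, hq, hql, rfl⟩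
  exact hab (by rw [eq_of_isPath_of_length_add_lt hg hp hq (by omega)])

theorem branch_subset_branch_succ (hg : g ≤ G.egirth) (hk : k + 1 < g) (hra : G.Adj r a)
    (hbr : b ≠ r) : branch G k a b ⊆ branch G (k + 1) r a := by
  rintro z ⟨p, hp, hpk, rfl⟩
  exact ⟨.cons hra p, isPath_cons_of_snd_ne hg hp hra hbr (by omega), by simpa using hpk, by simp⟩

theorem not_adj_of_adj_of_adj (hg : 4 ≤ G.egirth) (hra : G.Adj r a) (hrb : G.Adj r b) :
    ¬ G.Adj a b := fun hab =>
  (disjoint_branch (g := 4) (mod_cast hg) (by norm_num) hab.ne).notMem_of_mem_right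
    (self_mem_branch_one hrb) (mem_branch_succ_of_adj hra.ne (self_mem_branch_one hra) hab hrb.ne')

theorem exists_bijective_mem_branch {ι : Type*} [Finite ι] (hg : g ≤ G.egirth) (hk : 2 * k < g)
    (hcard : ENat.card ι ≤ ENat.card (G.neighborSet r)) {p : ι → V}
    (hp : ∀ a, G.Adj r a → ∃ i, p i ∈ branch G k r a) :
    ∃ f : G.neighborSet r → ι, f.Bijective ∧ ∀ a : G.neighborSet r, p (f a) ∈ branch G k r a := by
  choose f hf using fun a : G.neighborSet r => hp a a.2
  have hinj : f.Injective := fun a b hab => by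
    by_contra hne
    exact (disjoint_branch (k := k) (l := k) hg (by omega)
      (Subtype.coe_ne_coe.2 hne)).notMem_of_mem_left (hf a) (hab ▸ hf b)
  have := Finite.of_injective f hinj
  refine ⟨f, hinj.bijective_of_nat_card_le ?_, hf⟩
  rwa [ENat.card_eq_coe_natCard ι, ENat.card_eq_coe_natCard (G.neighborSet r), Nat.cast_le] at hcard

theorem exists_adj_ne_ne (h : 3 ≤ ENat.card (G.neighborSet r)) (ha : G.Adj r a) (hb : G.Adj r b) :
    ∃ c, G.Adj r c ∧ c ≠ a ∧ c ≠ b := by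
  obtain ⟨c, hca, hcb⟩ := ENat.exists_ne_ne_of_three_le h ⟨a, ha⟩ ⟨b, hb⟩
  exact ⟨c, c.2, fun h => hca (Subtype.ext h), fun h => hcb (Subtype.ext h)⟩

end Branches

section Cycles

variable {V : Type*} {G : SimpleGraph V} {r b c x y b₁ b₂ c₁ c₂ : V}

/-- The configuration that the theorem forbids: two cycles of length 8 whose intersection is a path
with two edges and middle vertex `v`. -/
def HasEightCyclesMeetingInTwoPath (G : SimpleGraph V) : Prop :=
  ∃ (v x y : V) (C C' : G.Walk v v),
    x ≠ y ∧ G.Adj v x ∧ G.Adj v y ∧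
    C.IsCycle ∧ C'.IsCycle ∧ C.length = 8 ∧ C'.length = 8 ∧
    {e | e ∈ C.edges} ∩ {e | e ∈ C'.edges} = {s(v, x), s(v, y)} ∧
    {w | w ∈ C.support} ∩ {w | w ∈ C'.support} = {x, v, y}

theorem edges_inter_edges_of_support_inter_support {v u u' w w' : V} {p : G.Walk u u'}
    {q : G.Walk w w'} (hxy : ¬ G.Adj x y)
    (hsupp : {z | z ∈ p.support} ∩ {z | z ∈ q.support} = {x, v, y})
    (hedges : {s(v, x), s(v, y)} ⊆ {e | e ∈ p.edges} ∩ {e | e ∈ q.edges}) :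
    {e | e ∈ p.edges} ∩ {e | e ∈ q.edges} = {s(v, x), s(v, y)} := by
  refine hedges.antisymm' fun e => ?_
  induction e with | h s t
  rintro ⟨hp, hq⟩
  have hst : G.Adj s t := p.adj_of_mem_edges hp
  have hs : s ∈ ({x, v, y} : Set V) := hsupp ▸
    ⟨p.fst_mem_support_of_mem_edges hp, q.fst_mem_support_of_mem_edges hq⟩
  have ht : t ∈ ({x, v, y} : Set V) := hsupp ▸
    ⟨p.snd_mem_support_of_mem_edges hp, q.snd_mem_support_of_mem_edges hq⟩
  rcases hs with rfl | rfl | rfl <;> rcases ht with rfl | rfl | rfl <;>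
    simp_all [Sym2.eq_swap, G.adj_comm]

theorem isCycle_and_length_eq_of_egirth {n : ℕ} (hg : (2 * n : ℕ) ≤ G.egirth)
    {p q : G.Walk r x} (hp : p.IsPath) (hq : q.IsPath) (hsnd : p.snd ≠ q.snd)
    (hpn : p.length ≤ n) (hqn : q.length ≤ n) :
    (p.append q.reverse).IsCycle ∧ (p.append q.reverse).length = 2 * n := by
  have hcycle := isCycle_append_reverse hg hp hq hsnd (by omega)
  have hle : 2 * n ≤ (p.append q.reverse).length := by
    exact_mod_cast hg.trans (egirth_le_length hcycle)
  refine ⟨hcycle, ?_⟩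
  rw [Walk.length_append, Walk.length_reverse] at hle ⊢
  omega

theorem hasEightCyclesMeetingInTwoPath_of_mem_branch (hg : (8 : ℕ) ≤ G.egirth)
    (hrb : G.Adj r b) (hrc : G.Adj r c) (hcb : c ≠ b)
    (hc₁r : c₁ ≠ r) (hc₂r : c₂ ≠ r) (hc : c₁ ≠ c₂) (hb₁r : b₁ ≠ r) (hb₂r : b₂ ≠ r) (hb : b₁ ≠ b₂)
    (hxc : x ∈ branch G 3 c c₁) (hxb : x ∈ branch G 3 b b₁)
    (hyc : y ∈ branch G 3 c c₂) (hyb : y ∈ branch G 3 b b₂) :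
    HasEightCyclesMeetingInTwoPath G := by
  -- The cycles are `r c ⋯ x ⋯ b r` and `r c ⋯ y ⋯ b r`.
  have hxy : x ≠ y := fun h =>
    (disjoint_branch hg (by norm_num) hc).notMem_of_mem_left hxc (h ▸ hyc)
  have hcb_adj : ¬ G.Adj c b :=
    not_adj_of_adj_of_adj ((Nat.cast_le.2 (by norm_num : 4 ≤ 8)).trans hg) hrc hrb
  obtain ⟨p, hp, hp_le, rfl⟩ := hxc
  obtain ⟨q, hq, hq_le, rfl⟩ := hxb
  obtain ⟨p', hp', hp'_le, rfl⟩ := hyc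
  obtain ⟨q', hq', hq'_le, rfl⟩ := hyb
  have hP := isPath_cons_of_snd_ne hg hp hrc hc₁r (by omega)
  have hQ := isPath_cons_of_snd_ne hg hq hrb hb₁r (by omega)
  have hP' := isPath_cons_of_snd_ne hg hp' hrc hc₂r (by omega)
  have hQ' := isPath_cons_of_snd_ne hg hq' hrb hb₂r (by omega)
  obtain ⟨hC, hC_length⟩ := isCycle_and_length_eq_of_egirth (n := 4) hg hP hQ (by simpa)
    (Nat.succ_le_succ hp_le) (Nat.succ_le_succ hq_le)
  obtain ⟨hC', hC'_length⟩ := isCycle_and_length_eq_of_egirth (n := 4) hg hP' hQ' (by simpa)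
    (Nat.succ_le_succ hp'_le) (Nat.succ_le_succ hq'_le)
  have hpp' : ∀ z ∈ p.support, z ∈ p'.support → z = c := fun _ =>
    eq_start_of_mem_supports hg hp hp' hc (by omega) hxy
  have hqq' : ∀ z ∈ q.support, z ∈ q'.support → z = b := fun _ =>
    eq_start_of_mem_supports hg hq hq' hb (by omega) hxy
  have hPQ' : ∀ z ∈ (Walk.cons hrc p).support, z ∈ (Walk.cons hrb q').support → z = r := fun _ =>
    eq_start_of_mem_supports hg hP hQ' (by simpa) (by simp; omega) hxy
  have hQP' : ∀ z ∈ (Walk.cons hrb q).support, z ∈ (Walk.cons hrc p').support → z = r := fun _ =>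
    eq_start_of_mem_supports hg hQ hP' (by simpa using hcb.symm) (by simp; omega) hxy
  have hsupp : {z | z ∈ ((Walk.cons hrc p).append (Walk.cons hrb q).reverse).support} ∩
      {z | z ∈ ((Walk.cons hrc p').append (Walk.cons hrb q').reverse).support} = {c, r, b} := by
    ext z
    simp only [Walk.support_cons] at hPQ' hQP'
    simp only [Set.mem_inter_iff, Set.mem_ofPred_eq, Walk.mem_support_append_iff,
      Walk.support_reverse, List.mem_reverse, Walk.support_cons]
    grind [Walk.start_mem_support]
  exact ⟨r, c, b, _, _, hcb, hrc, hrb, hC, hC', hC_length, hC'_length,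
    edges_inter_edges_of_support_inter_support hcb_adj hsupp
      (by rintro e (rfl | rfl) <;> simp), hsupp⟩

end Cycles

section Game

variable {V : Type*} {G : SimpleGraph V} {k : ℕ}

theorem not_copsWin_of_evasion (Safe : V → (Fin k → V) → Prop) (hstart : ∀ p, ∃ r, Safe r p)
    (hstep : ∀ r p p', Safe r p → (∀ i, p' i = p i ∨ G.Adj (p i) (p' i)) →
      (∀ i, p' i ≠ r) ∧ ∃ r', (r' = r ∨ G.Adj r r') ∧ Safe r' p') : ¬ copsWin G k := by
  rintro ⟨p₀, F, hF, hwin⟩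
  choose rstart hrstart using hstart
  have hmove : ∀ (p : Fin k → V) (r : V), ∃ r', (r' = r ∨ G.Adj r r') ∧
      ((∃ s, (s = r ∨ G.Adj r s) ∧ Safe s p) → Safe r' p) := fun p r => by
    by_cases h : ∃ s, (s = r ∨ G.Adj r s) ∧ Safe s p
    · exact h.imp fun s hs => ⟨hs.1, fun _ => hs.2⟩
    · exact ⟨r, .inl rfl, fun h' => absurd h' h⟩
  choose rmove hrmove hrsafe using hmove
  let play : ℕ → (Fin k → V) × V := Nat.rec (p₀, rstart p₀)
    fun _ s => (F s.1 s.2, rmove (F s.1 s.2) s.2)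
  have hsafe : ∀ t, Safe (play t).2 (play t).1 := fun t => by
    induction t with
    | zero => exact hrstart p₀
    | succ t ih => exact hrsafe _ _ (hstep _ _ _ ih (hF _ _)).2
  obtain ⟨t, i, hi⟩ := hwin rstart rmove hrmove (fun t => (play t).1) (fun t => (play t).2) rfl rfl
    (fun _ => rfl) (fun _ => rfl)
  rcases hi with hi | hi
  · exact (hstep _ _ _ (hsafe t) fun _ => .inl rfl).1 i hi
  · exact (hstep _ _ _ (hsafe t) (hF _ _)).1 i hi

theorem copsWin_card [Finite V] (G : SimpleGraph V) : copsWin G (Nat.card V) :=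
  ⟨(Finite.equivFin V).symm, fun p _ => p, fun _ _ _ => .inl rfl,
    fun _ _ _ _ rseq hstart _ _ _ =>
      ⟨0, Finite.equivFin V (rseq 0), .inl (by simp [hstart])⟩⟩

theorem copsWin_copNumber [Finite V] (G : SimpleGraph V) : copsWin G (copNumber G) :=
  Nat.sInf_mem (s := {c | copsWin G c}) ⟨_, copsWin_card G⟩

end Game

section Robber

variable {V ι : Type*} {G : SimpleGraph V} {r b c : V} {p p' : ι → V}

/-- The invariant of the robber's strategy, at `r` against cops placed by `p` who are about to move:
no cop is within distance 1, and for some neighbour `a` no cop is in the branch of radius 3 at `a`,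
which the robber can therefore enter on the next turn. -/
def IsSafe (G : SimpleGraph V) (r : V) (p : ι → V) : Prop :=
  (∀ i, p i ≠ r ∧ ¬ G.Adj r (p i)) ∧ ∃ a, G.Adj r a ∧ ∀ i, p i ∉ branch G 3 r a

/-- What is left of `IsSafe` once the cops have moved and it is the robber's turn. -/
def CanFlee (G : SimpleGraph V) (r : V) (p : ι → V) : Prop :=
  (∀ i, p i ≠ r) ∧ ∃ a, G.Adj r a ∧ ∀ i, p i ∉ branch G 2 r a

theorem IsSafe.canFlee (h : IsSafe G r p) (hmove : ∀ i, p' i = p i ∨ G.Adj (p i) (p' i)) :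
    CanFlee G r p' := by
  obtain ⟨hnear, a, hra, hfar⟩ := h
  refine ⟨fun i hi => ?_, a, hra, fun i hi => hfar i ?_⟩
  · rcases hmove i with h | h
    · exact (hnear i).1 (h.symm.trans hi)
    · exact (hnear i).2 (hi ▸ h.symm)
  · rcases hmove i with h | h
    · exact branch_mono (by norm_num) (h ▸ hi)
    · exact mem_branch_succ_of_adj hra.ne hi h.symm (hnear i).1

theorem hasEightCyclesMeetingInTwoPath_of_bijective (hg : (8 : ℕ) ≤ G.egirth)
    (hdeg : 3 ≤ ENat.card (G.neighborSet c)) (hrb : G.Adj r b) (hrc : G.Adj r c) (hbc : b ≠ c)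
    {f : G.neighborSet c → ι} {f' : G.neighborSet b → ι} (hf : f.Bijective) (hf' : f'.Bijective)
    (hmem : ∀ a : G.neighborSet c, p (f a) ∈ branch G 3 c a)
    (hmem' : ∀ a : G.neighborSet b, p (f' a) ∈ branch G 3 b a)
    (hr : f' ⟨r, hrb.symm⟩ = f ⟨r, hrc.symm⟩) : HasEightCyclesMeetingInTwoPath G := by
  obtain ⟨c₁, hcc₁, hc₁r, -⟩ := exists_adj_ne_ne hdeg hrc.symm hrc.symm
  obtain ⟨c₂, hcc₂, hc₂r, hc₂c₁⟩ := exists_adj_ne_ne hdeg hrc.symm hcc₁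
  have hpartner : ∀ d : G.neighborSet c, (d : V) ≠ r →
      ∃ e : G.neighborSet b, (e : V) ≠ r ∧ f' e = f d := fun d hdr => by
    obtain ⟨e, he⟩ := hf'.surjective (f d)
    refine ⟨e, fun her => hdr ?_, he⟩
    obtain rfl : e = ⟨r, hrb.symm⟩ := Subtype.ext her
    exact congrArg Subtype.val (hf.injective (he.symm.trans hr))
  obtain ⟨b₁, hb₁r, hb₁⟩ := hpartner ⟨c₁, hcc₁⟩ hc₁r
  obtain ⟨b₂, hb₂r, hb₂⟩ := hpartner ⟨c₂, hcc₂⟩ hc₂r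
  have hb₁b₂ : (b₁ : V) ≠ b₂ := fun h => hc₂c₁ <| congrArg Subtype.val <|
    hf.injective (hb₂.symm.trans ((congrArg f' (Subtype.ext h)).symm.trans hb₁))
  exact hasEightCyclesMeetingInTwoPath_of_mem_branch hg hrb hrc hbc.symm hc₁r hc₂r hc₂c₁.symm
    hb₁r hb₂r hb₁b₂ (hmem _) (hb₁ ▸ hmem' b₁) (hmem _) (hb₂ ▸ hmem' b₂)

variable [Finite ι]

theorem exists_forall_ne_and_not_adj [Nonempty V] (hg : (7 : ℕ) ≤ G.egirth)
    (hdeg : ∀ v, 1 < ENat.card (G.neighborSet v))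
    (hcard : ∀ v, ENat.card ι ≤ ENat.card (G.neighborSet v)) (p : ι → V) :
    ∃ v, ∀ i, p i ≠ v ∧ ¬ G.Adj v (p i) := by
  -- Otherwise the branches around the position of a cop `i₀` already require all the cops.
  by_contra! hcover
  obtain ⟨i₀, -⟩ := hcover (Classical.arbitrary V)
  have hbranch : ∀ a, G.Adj (p i₀) a → ∃ i, p i ∈ branch G 3 (p i₀) a := fun a ha => by
    have := (ENat.one_lt_card_iff_nontrivial _).1 (hdeg a)
    obtain ⟨⟨b, hab⟩, hb⟩ := exists_ne (⟨p i₀, ha.symm⟩ : G.neighborSet a)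
    have hb_mem : b ∈ branch G 2 (p i₀) a :=
      mem_branch_succ_of_adj ha.ne (self_mem_branch_one ha) hab fun h => hb (Subtype.ext h)
    obtain ⟨i, hi⟩ := hcover b
    refine ⟨i, ?_⟩
    by_cases hib : p i = b
    · exact branch_mono (by norm_num) (hib ▸ hb_mem)
    · refine mem_branch_succ_of_adj ha.ne hb_mem (hi hib) fun h => ?_
      exact not_adj_of_adj_of_adj ((Nat.cast_le.2 (by norm_num : 4 ≤ 7)).trans hg) ha.symm hab
        (h ▸ hi hib).symm
  obtain ⟨f, hf, hmem⟩ := exists_bijective_mem_branch hg (by norm_num) (hcard _) hbranch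
  obtain ⟨a, ha⟩ := hf.surjective i₀
  exact root_notMem_branch a.2.ne (ha ▸ hmem a)

theorem exists_bijective_of_not_isSafe (hg : (7 : ℕ) ≤ G.egirth)
    (hcard : ENat.card ι ≤ ENat.card (G.neighborSet c)) (hrc : G.Adj r c) (hr : ∀ i, p i ≠ r)
    (hc : ∀ i, p i ∉ branch G 2 r c) (hsafe : ¬ IsSafe G c p) :
    ∃ f : G.neighborSet c → ι, f.Bijective ∧ ∀ a : G.neighborSet c, p (f a) ∈ branch G 3 c a := by
  refine exists_bijective_mem_branch hg (by norm_num) hcard fun a hca => ?_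
  by_contra! ha
  refine hsafe ⟨fun i => ⟨fun h => hc i ?_, fun h => hc i ?_⟩, a, hca, ha⟩
  · rw [h]
    exact branch_mono (by norm_num) (self_mem_branch_one hrc)
  · exact mem_branch_succ_of_adj hrc.ne (self_mem_branch_one hrc) h (hr i)

theorem CanFlee.exists_isSafe (hg : (8 : ℕ) ≤ G.egirth)
    (hdeg : ∀ v, 3 ≤ ENat.card (G.neighborSet v))
    (hcard : ∀ v, ENat.card ι ≤ ENat.card (G.neighborSet v))
    (hno : ¬ HasEightCyclesMeetingInTwoPath G) (h : CanFlee G r p) :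
    ∃ r', G.Adj r r' ∧ IsSafe G r' p := by
  by_contra! hdanger
  have hg7 : (7 : ℕ) ≤ G.egirth := (Nat.cast_le.2 (by norm_num)).trans hg
  obtain ⟨hr, c, hrc, hc⟩ := h
  obtain ⟨f, hf, hmem⟩ := exists_bijective_of_not_isSafe hg7 (hcard c) hrc hr hc (hdanger c hrc)
  obtain ⟨a, hra, ha⟩ : ∃ a, G.Adj r a ∧ p (f ⟨r, hrc.symm⟩) ∈ branch G 2 r a :=
    (exists_mem_branch_of_mem_branch_succ hrc.ne' (hmem ⟨r, hrc.symm⟩)).resolve_left (hr _)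
  obtain ⟨b, hrb, hba, hbc⟩ := exists_adj_ne_ne (hdeg r) hra hrc
  have hb : ∀ i, p i ∉ branch G 2 r b := fun i hi => by
    obtain ⟨d, rfl⟩ := hf.surjective i
    by_cases hdr : (d : V) = r
    · obtain rfl : d = ⟨r, hrc.symm⟩ := Subtype.ext hdr
      exact (disjoint_branch hg (by norm_num) hba).notMem_of_mem_left hi ha
    · exact (disjoint_branch hg (by norm_num) hbc).notMem_of_mem_left hi
        (branch_subset_branch_succ hg (by norm_num) hrc hdr (hmem d))
  obtain ⟨f', hf', hmem'⟩ := exists_bijective_of_not_isSafe hg7 (hcard b) hrb hr hb (hdanger b hrb)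
  have hf'r : f' ⟨r, hrb.symm⟩ = f ⟨r, hrc.symm⟩ := by
    obtain ⟨e, he⟩ := hf'.surjective (f ⟨r, hrc.symm⟩)
    have her : (e : V) = r := by
      by_contra her
      exact (disjoint_branch hg (by norm_num) hba).notMem_of_mem_right ha
        (he ▸ branch_subset_branch_succ hg (by norm_num) hrb her (hmem' e))
    obtain rfl : e = ⟨r, hrb.symm⟩ := Subtype.ext her
    exact he
  exact hno (hasEightCyclesMeetingInTwoPath_of_bijective hg (hdeg c) hrb hrc hbc hf hf' hmem hmem'
    hf'r)

theorem exists_isSafe [Nonempty V] (hg : (8 : ℕ) ≤ G.egirth)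
    (hdeg : ∀ v, 3 ≤ ENat.card (G.neighborSet v))
    (hcard : ∀ v, ENat.card ι ≤ ENat.card (G.neighborSet v))
    (hno : ¬ HasEightCyclesMeetingInTwoPath G) (p : ι → V) : ∃ r, IsSafe G r p := by
  have hdeg' : ∀ v, 1 < ENat.card (G.neighborSet v) := fun v =>
    lt_of_lt_of_le (by norm_num) (hdeg v)
  obtain ⟨v, hv⟩ :=
    exists_forall_ne_and_not_adj ((Nat.cast_le.2 (by norm_num)).trans hg) hdeg' hcard p
  have := (ENat.one_lt_card_iff_nontrivial _).1 (hdeg' v)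
  obtain ⟨r, hvr⟩ : Nonempty (G.neighborSet v) := inferInstance
  have hflee : CanFlee G r p := by
    refine ⟨fun i hi => (hv i).2 (hi ▸ hvr), v, hvr.symm, fun i hi => ?_⟩
    rcases exists_mem_branch_of_mem_branch_succ hvr.ne' hi with h | ⟨a, hva, ha⟩
    · exact (hv i).1 h
    · exact (hv i).2 (eq_of_mem_branch_one hva.ne ha ▸ hva)
  exact (hflee.exists_isSafe hg hdeg hcard hno).imp fun _ h => h.2

end Robber

theorem cop_number_ge_four_of_no_two_eight_cycles_general {V : Type*} [Nonempty V]
    (G : SimpleGraph V) {d k : ℕ} (hd : 3 ≤ d) (hdeg : ∀ v, d ≤ ENat.card (G.neighborSet v))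
    (hg : 8 ≤ G.egirth) (hno : ¬ HasEightCyclesMeetingInTwoPath G) (hwin : copsWin G k) :
    d < k := by
  by_contra! hkd
  have hcard : ∀ v, ENat.card (Fin k) ≤ ENat.card (G.neighborSet v) := fun v => by
    simpa using (Nat.cast_le.2 hkd).trans (hdeg v)
  have hdeg3 : ∀ v, 3 ≤ ENat.card (G.neighborSet v) := fun v =>
    (Nat.cast_le.2 hd : ((3 : ℕ) : ℕ∞) ≤ d).trans (hdeg v)
  refine not_copsWin_of_evasion (fun r p => IsSafe G r p) (exists_isSafe hg hdeg3 hcard hno)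
    (fun r p p' hsafe hmove => ?_) hwin
  have hflee := hsafe.canFlee hmove
  exact ⟨hflee.1, (hflee.exists_isSafe hg hdeg3 hcard hno).imp fun _ h => ⟨.inr h.1, h.2⟩⟩

/-- Let `G` be a 3-regular simple graph of girth at least 8 that does not contain two
cycles of length 8 whose intersection is a path of length 2 (two edges `s(v,x)`, `s(v,y)`
and the three vertices `x, v, y`). Then the cop number of `G` is at least 4. -/
theorem cop_number_ge_four_of_no_two_eight_cycles {V : Type*} [Fintype V]
    (G : SimpleGraph V) [DecidableRel G.Adj]
    (h3 : ∀ v : V, G.degree v = 3) (hg : 8 ≤ G.girth)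
    (hno : ¬ ∃ (v x y : V) (C C' : G.Walk v v),
      x ≠ y ∧ G.Adj v x ∧ G.Adj v y ∧
      C.IsCycle ∧ C'.IsCycle ∧ C.length = 8 ∧ C'.length = 8 ∧
      {e | e ∈ C.edges} ∩ {e | e ∈ C'.edges} = {s(v, x), s(v, y)} ∧
      {w | w ∈ C.support} ∩ {w | w ∈ C'.support} = {x, v, y}) :
    4 ≤ copNumber G := by
  have : Nonempty V := not_isEmpty_iff.1 fun _ => by
    simp [girth_eq_zero.2 (.of_subsingleton (G := G))] at hg
  exact cop_number_ge_four_of_no_two_eight_cycles_general G le_rfl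
    (fun v => by rw [ENat.card_eq_coe_fintype_card, card_neighborSet_eq_degree, h3])
    ((Nat.cast_le.2 hg).trans (ENat.natCast_toNat_le_self _)) hno (copsWin_copNumber G)
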